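/- For every positive integer n there exists a K_{2,2}-free 𝒪_2-free graph G with at least n vertices whose tree-independence number satisfies tree-α(G) ≥ (log_2 |V(G)| − 1)/2. -/

import Mathlib

open SimpleGraph

/-- `G` contains `k` pairwise independent cycles: `k` cycles that are pairwise
vertex-disjoint with no edge between any two of them. -/
def HasIndepCycles {V : Type*} (G : SimpleGraph V) (k : ℕ) : Prop :=
  ∃ (a : Fin k → V) (w : ∀ i : Fin k, G.Walk (a i) (a i)),
    (∀ i, (w i).IsCycle) ∧
    ∀ i j : Fin k, i ≠ j →
      ∀ u ∈ (w i).support, ∀ v ∈ (w j).support, u ≠ v ∧ ¬ G.Adj u v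

/-- `G` is `𝒪_k`-free: it does not contain `k` pairwise independent cycles. -/
def OkFree {V : Type*} (G : SimpleGraph V) (k : ℕ) : Prop :=
  ¬ HasIndepCycles G k

/-- The independence number of the subgraph of `G` induced by `s`:
the supremum of sizes of independent sets contained in `s`. -/
noncomputable def setIndepNum {V : Type*} (G : SimpleGraph V) (s : Set V) : ℕ :=
  sSup {n | ∃ t : Finset V, ↑t ⊆ s ∧ (∀ u ∈ t, ∀ v ∈ t, u ≠ v → ¬ G.Adj u v) ∧ t.card = n}

/-- A tree decomposition of a graph `G`. -/
structure TreeDecomp {V : Type*} (G : SimpleGraph V) where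
  ι : Type
  T : SimpleGraph ι
  tree : T.IsTree
  bag : ι → Set V
  bag_vert : ∀ v : V, ∃ i, v ∈ bag i
  bag_edge : ∀ u v : V, G.Adj u v → ∃ i, u ∈ bag i ∧ v ∈ bag i
  bag_conn : ∀ v : V, (T.induce {i | v ∈ bag i}).Connected

/-- The tree-independence number of `G`: the least `n` such that `G` has a tree
decomposition all of whose bags induce subgraphs with independence number at most `n`. -/
noncomputable def treeIndepNum {V : Type*} (G : SimpleGraph V) : ℕ :=
  sInf {n | ∃ D : TreeDecomp G, ∀ i, setIndepNum G (D.bag i) ≤ n}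

/-- `G` is `H`-free: no induced subgraph of `G` is isomorphic to `H`. -/
def IndFree {W V : Type*} (H : SimpleGraph W) (G : SimpleGraph V) : Prop :=
  IsEmpty (H ↪g G)

/-! ### The Helly property for subtrees -/

/-- Any two vertices of `U` are joined by a walk of `T` that stays inside `U`. -/
def WalkConnected {ι : Type*} (T : SimpleGraph ι) (U : Set ι) : Prop :=
  ∀ x ∈ U, ∀ y ∈ U, ∃ p : T.Walk x y, ∀ z ∈ p.support, z ∈ U

theorem WalkConnected.mem_of_isPath {ι : Type*} {T : SimpleGraph ι} (hT : T.IsAcyclic)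
    {U : Set ι} (hU : WalkConnected T U) {x y : ι} (hx : x ∈ U) (hy : y ∈ U)
    {p : T.Walk x y} (hp : p.IsPath) : ∀ z ∈ p.support, z ∈ U := by
  classical
  obtain ⟨q, hq⟩ := hU x hx y hy
  have h : (⟨p, hp⟩ : T.Path x y) = ⟨q.bypass, q.bypass_isPath⟩ := (hT.subsingleton_path x y).elim _ _
  have h' : p = q.bypass := congrArg Subtype.val h
  intro z hz
  rw [h'] at hz
  exact hq z (q.support_bypass_subset_support hz)

theorem WalkConnected.inter {ι : Type*} {T : SimpleGraph ι} (hT : T.IsAcyclic)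
    {A B : Set ι} (hA : WalkConnected T A) (hB : WalkConnected T B) :
    WalkConnected T (A ∩ B) := by
  classical
  rintro x ⟨hxA, hxB⟩ y ⟨hyA, hyB⟩
  obtain ⟨p, -⟩ := hA x hxA y hyA
  exact ⟨p.bypass, fun z hz => ⟨hA.mem_of_isPath hT hxA hyA p.bypass_isPath z hz,
    hB.mem_of_isPath hT hxB hyB p.bypass_isPath z hz⟩⟩

/-- A walk from `P` to `Q` each of whose edges lies within `P` or within `Q` meets `P ∩ Q`. -/
theorem SimpleGraph.Walk.exists_mem_support_inter {ι : Type*} {T : SimpleGraph ι} {P Q : Set ι}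
    {x y : ι} (r : T.Walk x y) (hx : x ∈ P) (hy : y ∈ Q)
    (he : ∀ a b, s(a, b) ∈ r.edges → (a ∈ P ∧ b ∈ P) ∨ (a ∈ Q ∧ b ∈ Q)) :
    ∃ d ∈ r.support, d ∈ P ∧ d ∈ Q := by
  induction r with
  | nil => exact ⟨_, by simp, hx, hy⟩
  | @cons u v w h p ih =>
    rcases he u v (by simp) with h1 | h1
    · obtain ⟨d, hd, hd'⟩ := ih h1.2 hy fun a b hab => he a b (by simp [hab])
      exact ⟨d, by simp [hd], hd'⟩
    · exact ⟨u, by simp, hx, h1.1⟩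

theorem WalkConnected.inter_inter_nonempty {ι : Type*} {T : SimpleGraph ι} (hT : T.IsAcyclic)
    {A B C : Set ι} (hA : WalkConnected T A) (hB : WalkConnected T B) (hC : WalkConnected T C)
    (hAB : (A ∩ B).Nonempty) (hBC : (B ∩ C).Nonempty) (hAC : (A ∩ C).Nonempty) :
    ((A ∩ C) ∩ (B ∩ C)).Nonempty := by
  classical
  obtain ⟨c, hcA, hcB⟩ := hAB
  obtain ⟨a, haB, haC⟩ := hBC
  obtain ⟨b, hbA, hbC⟩ := hAC
  obtain ⟨q, hq⟩ := hB c hcB a haB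
  obtain ⟨p, hp⟩ := hC a haC b hbC
  have hr := hA.mem_of_isPath hT hcA hbA (q.append p).bypass_isPath
  obtain ⟨d, hd, hdB, hdC⟩ := (q.append p).bypass.exists_mem_support_inter hcB hbC (by
    intro x y hxy
    have hxy' := (q.append p).edges_bypass_subset_edges hxy
    rw [Walk.edges_append, List.mem_append] at hxy'
    rcases hxy' with h | h
    · exact Or.inl ⟨hq _ (q.fst_mem_support_of_mem_edges h),
        hq _ (q.snd_mem_support_of_mem_edges h)⟩
    · exact Or.inr ⟨hp _ (p.fst_mem_support_of_mem_edges h),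
        hp _ (p.snd_mem_support_of_mem_edges h)⟩)
  exact ⟨d, ⟨hr d hd, hdC⟩, hdB, hdC⟩

/-- Finitely many pairwise intersecting subtrees of a tree have a common vertex. -/
theorem SimpleGraph.IsTree.helly {ι κ : Type*} {T : SimpleGraph ι} (hT : T.IsTree)
    (s : Finset κ) (f : κ → Set ι) (hf : ∀ i ∈ s, WalkConnected T (f i))
    (hi : ∀ i ∈ s, ∀ j ∈ s, (f i ∩ f j).Nonempty) : ∃ x, ∀ i ∈ s, x ∈ f i := by
  classical
  induction s using Finset.induction_on generalizing f with
  | empty =>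
    obtain ⟨x⟩ := hT.connected.nonempty
    exact ⟨x, by simp⟩
  | insert a s _ ih =>
    have ha := Finset.mem_insert_self a s
    have hs : ∀ i ∈ s, i ∈ insert a s := fun i => Finset.mem_insert_of_mem
    rcases s.eq_empty_or_nonempty with rfl | ⟨i₀, hi₀⟩
    · obtain ⟨x, hx, -⟩ := hi a ha a ha
      exact ⟨x, by simpa using hx⟩
    · obtain ⟨x, hx⟩ := ih (fun i => f i ∩ f a)
        (fun i h => (hf i (hs i h)).inter hT.isAcyclic (hf a ha))
        (fun i h j h' => WalkConnected.inter_inter_nonempty hT.isAcyclic (hf i (hs i h))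
          (hf j (hs j h')) (hf a ha) (hi i (hs i h) j (hs j h')) (hi j (hs j h') a ha)
          (hi i (hs i h) a ha))
      refine ⟨x, fun i h => ?_⟩
      rcases Finset.mem_insert.1 h with rfl | h
      · exact (hx i₀ hi₀).2
      · exact (hx i h).1

/-! ### Brambles and tree decompositions -/

theorem TreeDecomp.exists_walk_bag {V : Type*} {G : SimpleGraph V} (D : TreeDecomp G) {v : V}
    {x y : D.ι} (hx : v ∈ D.bag x) (hy : v ∈ D.bag y) :
    ∃ p : D.T.Walk x y, ∀ z ∈ p.support, v ∈ D.bag z := by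
  obtain ⟨w⟩ := (D.bag_conn v).preconnected ⟨x, hx⟩ ⟨y, hy⟩
  refine ⟨w.map (Embedding.induce {i | v ∈ D.bag i}).toHom, fun z hz => ?_⟩
  obtain ⟨t, -, rfl⟩ := List.mem_map.1 ((w.support_map _) ▸ hz)
  exact t.2

theorem TreeDecomp.exists_walk_of_walk {V : Type*} {G : SimpleGraph V} (D : TreeDecomp G)
    {B : Set V} {u v : V} (w : G.Walk u v) (hw : ∀ z ∈ w.support, z ∈ B) {x y : D.ι}
    (hx : u ∈ D.bag x) (hy : v ∈ D.bag y) :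
    ∃ p : D.T.Walk x y, ∀ z ∈ p.support, ∃ b ∈ B, b ∈ D.bag z := by
  induction w generalizing x with
  | nil =>
    obtain ⟨p, hp⟩ := D.exists_walk_bag hx hy
    exact ⟨p, fun z hz => ⟨_, hw _ (by simp), hp z hz⟩⟩
  | cons h w ih =>
    obtain ⟨t, ht, ht'⟩ := D.bag_edge _ _ h
    obtain ⟨p, hp⟩ := D.exists_walk_bag hx ht
    obtain ⟨q, hq⟩ := ih (fun z hz => hw z (by simp [hz])) ht' hy
    refine ⟨p.append q, fun z hz => ?_⟩
    rcases (Walk.mem_support_append_iff p q).1 hz with hz | hz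
    · exact ⟨_, hw _ (by simp), hp z hz⟩
    · exact hq z hz

/-- Some bag of a tree decomposition meets every one of finitely many pairwise adjacent connected
vertex sets. -/
theorem TreeDecomp.exists_bag_meets {V κ : Type*} [Finite κ] {G : SimpleGraph V}
    (D : TreeDecomp G) (B : κ → Set V) (hB : ∀ i, WalkConnected G (B i))
    (hne : ∀ i, (B i).Nonempty)
    (hadj : ∀ i j, i ≠ j → ∃ u ∈ B i, ∃ v ∈ B j, G.Adj u v) :
    ∃ t, ∀ i, ∃ v ∈ B i, v ∈ D.bag t := by
  have := Fintype.ofFinite κ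
  obtain ⟨t, ht⟩ := D.tree.helly Finset.univ (fun i => {t | ∃ v ∈ B i, v ∈ D.bag t})
    (fun i _ => by
      rintro x ⟨u, hu, hux⟩ y ⟨v, hv, hvy⟩
      obtain ⟨w, hw⟩ := hB i u hu v hv
      exact D.exists_walk_of_walk w hw hux hvy)
    (fun i _ j _ => by
      by_cases hij : i = j
      · subst hij
        obtain ⟨v, hv⟩ := hne i
        obtain ⟨t, ht⟩ := D.bag_vert v
        exact ⟨t, ⟨v, hv, ht⟩, v, hv, ht⟩
      · obtain ⟨u, hu, v, hv, huv⟩ := hadj i j hij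
        obtain ⟨t, ht, ht'⟩ := D.bag_edge u v huv
        exact ⟨t, ⟨u, hu, ht⟩, v, hv, ht'⟩)
  exact ⟨t, fun i => ht i (Finset.mem_univ i)⟩

theorem card_le_setIndepNum {V : Type*} [Finite V] {G : SimpleGraph V} {s : Set V} {t : Finset V}
    (hts : ↑t ⊆ s) (ht : ∀ u ∈ t, ∀ v ∈ t, u ≠ v → ¬ G.Adj u v) :
    t.card ≤ setIndepNum G s := by
  have := Fintype.ofFinite V
  refine le_csSup ⟨Fintype.card V, ?_⟩ ⟨t, hts, ht, rfl⟩
  rintro _ ⟨t', -, -, rfl⟩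
  exact Finset.card_le_univ t'

/-- The tree decomposition with a single bag. -/
def TreeDecomp.trivial {V : Type*} (G : SimpleGraph V) : TreeDecomp G where
  ι := Unit
  T := ⊥
  tree := .of_subsingleton
  bag _ := Set.univ
  bag_vert _ := ⟨(), _root_.trivial⟩
  bag_edge _ _ _ := ⟨(), _root_.trivial, _root_.trivial⟩
  bag_conn _ := by
    refine @Connected.mk _ _ (fun x y => ?_) ⟨⟨(), _root_.trivial⟩⟩
    rw [Subsingleton.elim x y]

theorem le_treeIndepNum {V : Type*} {G : SimpleGraph V} {r : ℕ}
    (h : ∀ D : TreeDecomp G, ∃ i, r ≤ setIndepNum G (D.bag i)) : r ≤ treeIndepNum G := by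
  refine le_csInf ⟨setIndepNum G Set.univ, TreeDecomp.trivial G, fun _ => le_rfl⟩ ?_
  rintro n ⟨D, hD⟩
  obtain ⟨i, hi⟩ := h D
  exact hi.trans (hD i)

/-! ### The ruler graph -/

/-- The exponent of two in `p` is `m + 1`. -/
def RulerLabel (m p : ℕ) : Prop := p % 2 ^ (m + 2) = 2 ^ (m + 1)

theorem RulerLabel.dvd {m p : ℕ} (h : RulerLabel m p) : 2 ^ (m + 1) ∣ p := by
  unfold RulerLabel at h
  rw [← Nat.div_add_mod p (2 ^ (m + 2)), h]
  exact dvd_add (Dvd.dvd.mul_right (pow_dvd_pow 2 (by omega)) _) dvd_rfl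

theorem RulerLabel.dvd_of_lt {m j p : ℕ} (h : RulerLabel j p) (hm : m < j) : 2 ^ (m + 2) ∣ p :=
  (pow_dvd_pow 2 (by omega)).trans h.dvd

theorem RulerLabel.not_dvd {m p : ℕ} (h : RulerLabel m p) : ¬ 2 ^ (m + 2) ∣ p := by
  intro h'
  unfold RulerLabel at h
  rw [Nat.mod_eq_zero_of_dvd h'] at h
  exact (pow_ne_zero _ two_ne_zero) h.symm

theorem RulerLabel.pos {m p : ℕ} (h : RulerLabel m p) : 0 < p :=
  Nat.pos_of_ne_zero fun h0 => h.not_dvd (h0 ▸ dvd_zero _)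

theorem RulerLabel.unique {i j p : ℕ} (hi : RulerLabel i p) (hj : RulerLabel j p) : i = j := by
  rcases lt_trichotomy i j with h | h | h
  · exact (hi.not_dvd (hj.dvd_of_lt h)).elim
  · exact h
  · exact (hj.not_dvd (hi.dvd_of_lt h)).elim

theorem RulerLabel.not_add_two {i p : ℕ} (hp : RulerLabel i p) : ¬ RulerLabel i (p + 2) := by
  intro hq
  have h : p + 2 ≡ p + 0 [MOD 2 ^ (i + 2)] := hq.trans hp.symm
  have h2 := (Nat.modEq_zero_iff_dvd.1 (Nat.ModEq.add_left_cancel' p h))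
  have h3 := Nat.le_of_dvd two_pos h2
  have h4 : 2 ^ (i + 2) = 4 * 2 ^ i := by ring
  have h5 : 0 < 2 ^ i := by positivity
  omega

theorem rulerLabel_add {m p : ℕ} (h : 2 ^ (m + 2) ∣ p) : RulerLabel m (p + 2 ^ (m + 1)) := by
  obtain ⟨c, rfl⟩ := h
  unfold RulerLabel
  rw [Nat.mul_add_mod, Nat.mod_eq_of_lt (Nat.pow_lt_pow_right (by norm_num) (by omega))]

theorem rulerLabel_sub {m p : ℕ} (h : 2 ^ (m + 2) ∣ p) (hp : 0 < p) :
    RulerLabel m (p - 2 ^ (m + 1)) := by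
  obtain ⟨c, rfl⟩ := h
  obtain ⟨c, rfl⟩ : ∃ d, c = d + 1 := Nat.exists_eq_succ_of_ne_zero (by rintro rfl; simp at hp)
  have : 2 ^ (m + 2) * (c + 1) - 2 ^ (m + 1) = 2 ^ (m + 2) * c + 2 ^ (m + 1) := by
    have : 2 ^ (m + 2) * (c + 1) = 2 ^ (m + 2) * c + 2 ^ (m + 1) + 2 ^ (m + 1) := by ring
    omega
  rw [this]
  exact rulerLabel_add (dvd_mul_right _ _)

theorem RulerLabel.lt_of_not_dvd {i m x : ℕ} (h : RulerLabel i x)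
    (hx : ¬ 2 ^ (m + 1) ∣ x) : i < m := by
  by_contra! hc
  exact hx ((pow_dvd_pow 2 (by omega)).trans h.dvd)

/-- The path `0, 1, …, 2 ^ (k + 1) - 1` together with `k` further vertices, the `i`-th of which is
adjacent to the path vertices in which the exponent of two is `i + 1`. -/
def rulerGraph (k : ℕ) : SimpleGraph (Fin k ⊕ Fin (2 ^ (k + 1))) where
  Adj
    | .inl _, .inl _ => False
    | .inl i, .inr p => RulerLabel i p
    | .inr p, .inl i => RulerLabel i p
    | .inr p, .inr q => p.val + 1 = q.val ∨ q.val + 1 = p.val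
  symm := ⟨by rintro (i | p) (j | q) h <;> first | exact h | exact h.symm⟩
  loopless := ⟨by rintro (i | p) h; exacts [h, by rcases h with h | h <;> omega]⟩

section Adjacency

variable {k : ℕ} {i j : Fin k} {p q : Fin (2 ^ (k + 1))}

theorem rulerGraph_adj_inl_inl : ¬ (rulerGraph k).Adj (.inl i) (.inl j) := id

theorem rulerGraph_adj_inl_inr : (rulerGraph k).Adj (.inl i) (.inr p) ↔ RulerLabel i p := Iff.rfl

theorem rulerGraph_adj_inr_inl : (rulerGraph k).Adj (.inr p) (.inl i) ↔ RulerLabel i p := Iff.rfl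

theorem rulerGraph_adj_inr_inr :
    (rulerGraph k).Adj (.inr p) (.inr q) ↔ p.val + 1 = q.val ∨ q.val + 1 = p.val := Iff.rfl

end Adjacency

theorem rulerGraph_common_neighbors {k : ℕ} {a a' b b' : Fin k ⊕ Fin (2 ^ (k + 1))}
    (ha : a ≠ a') (hb : b ≠ b') (h₁ : (rulerGraph k).Adj a b) (h₂ : (rulerGraph k).Adj a b')
    (h₃ : (rulerGraph k).Adj a' b) (h₄ : (rulerGraph k).Adj a' b') : False := by
  have key : ∀ {i p q r : ℕ}, RulerLabel i p → RulerLabel i q → p ≠ q →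
      (r + 1 = p ∨ p + 1 = r) → (r + 1 = q ∨ q + 1 = r) → False := by
    intro i p q r hp hq hpq h h'
    rcases (by omega : q = p + 2 ∨ p = q + 2) with rfl | rfl
    · exact hp.not_add_two hq
    · exact hq.not_add_two hp
  rcases a with i | p <;> rcases a' with j | q <;> rcases b with i' | p' <;>
    rcases b' with j' | q' <;>
    simp only [rulerGraph_adj_inl_inl, rulerGraph_adj_inl_inr, rulerGraph_adj_inr_inl,
      rulerGraph_adj_inr_inr, ne_eq, Sum.inl.injEq, Sum.inr.injEq, Fin.ext_iff] at *
  · exact ha (h₁.unique h₃)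
  · exact key h₁ h₂ hb h₃ h₄
  · exact key h₃ h₄ hb h₁ h₂
  · exact hb (h₁.unique h₂)
  · exact key (r := q') h₁ h₃ ha (by omega) (by omega)
  · exact key (r := p') h₂ h₄ ha (by omega) (by omega)
  · omega

theorem rulerGraph_indFree (k : ℕ) :
    IndFree (completeBipartiteGraph (Fin 2) (Fin 2)) (rulerGraph k) := by
  refine ⟨fun f => ?_⟩
  have hadj : ∀ i j : Fin 2, (rulerGraph k).Adj (f (.inl i)) (f (.inr j)) := fun i j =>
    f.map_adj_iff.2 (by simp)
  exact rulerGraph_common_neighbors (f.injective.ne (by simp : Sum.inl (0 : Fin 2) ≠ Sum.inl 1))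
    (f.injective.ne (by simp : Sum.inr (0 : Fin 2) ≠ Sum.inr 1))
    (hadj 0 0) (hadj 0 1) (hadj 1 0) (hadj 1 1)

/-! ### Independent cycles -/

/-- Every vertex of `S` has two neighbours in `S`. -/
def MinDegreeTwoOn {V : Type*} (G : SimpleGraph V) (S : Set V) : Prop :=
  ∀ v ∈ S, ∃ a ∈ S, ∃ b ∈ S, a ≠ b ∧ G.Adj v a ∧ G.Adj v b

theorem SimpleGraph.Walk.IsCycle.minDegreeTwoOn {V : Type*} {G : SimpleGraph V} {u : V}
    {w : G.Walk u u} (hw : w.IsCycle) : MinDegreeTwoOn G {v | v ∈ w.support} := by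
  intro v hv
  obtain ⟨a, b, hab, h⟩ := Set.ncard_eq_two.1 (hw.ncard_neighborSet_toSubgraph_eq_two hv)
  have ha : w.toSubgraph.Adj v a := by
    rw [← Subgraph.mem_neighborSet, h]; simp
  have hb : w.toSubgraph.Adj v b := by
    rw [← Subgraph.mem_neighborSet, h]; simp
  exact ⟨a, (w.mem_verts_toSubgraph).1 ha.snd_mem, b, (w.mem_verts_toSubgraph).1 hb.snd_mem, hab,
    ha.adj_sub, hb.adj_sub⟩

/-- The positions of the path vertices in `S`. -/
def pathTrace {k : ℕ} (S : Set (Fin k ⊕ Fin (2 ^ (k + 1)))) : Set ℕ :=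
  {x | ∃ p : Fin (2 ^ (k + 1)), p.val = x ∧ .inr p ∈ S}

theorem MinDegreeTwoOn.neighbors_mem_pathTrace {k : ℕ} {S : Set (Fin k ⊕ Fin (2 ^ (k + 1)))}
    (hS : MinDegreeTwoOn (rulerGraph k) S) {x : ℕ} (hx : x ∈ pathTrace S)
    (hl : ∀ i : Fin k, .inl i ∈ S → ¬ RulerLabel i x) :
    x + 1 ∈ pathTrace S ∧ x - 1 ∈ pathTrace S := by
  obtain ⟨p, rfl, hp⟩ := hx
  obtain ⟨a, ha, b, hb, hab, h₁, h₂⟩ := hS _ hp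
  rcases a with i | q
  · exact (hl i ha h₁).elim
  rcases b with i | r
  · exact (hl i hb h₂).elim
  rw [rulerGraph_adj_inr_inr] at h₁ h₂
  have hne : q.val ≠ r.val := fun h => hab (congrArg Sum.inr (Fin.ext h))
  rcases h₁ with h₁ | h₁ <;> rcases h₂ with h₂ | h₂
  · omega
  · exact ⟨⟨q, by omega, ha⟩, r, by omega, hb⟩
  · exact ⟨⟨r, by omega, hb⟩, q, by omega, ha⟩
  · omega

theorem MinDegreeTwoOn.exists_inl_mem {k : ℕ} {S : Set (Fin k ⊕ Fin (2 ^ (k + 1)))}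
    (hS : MinDegreeTwoOn (rulerGraph k) S) (hne : S.Nonempty) : ∃ i, .inl i ∈ S := by
  by_contra! hc
  obtain ⟨v, hv⟩ := hne
  rcases v with i | p
  · exact hc i hv
  have h : ∀ n, p.val + n ∈ pathTrace S := by
    intro n
    induction n with
    | zero => exact ⟨p, rfl, hv⟩
    | succ n ih => exact (hS.neighbors_mem_pathTrace ih fun i hi => (hc i hi).elim).1
  obtain ⟨q, hq, -⟩ := h (2 ^ (k + 1))
  omega

theorem MinDegreeTwoOn.inl_notMem {k : ℕ} {S : Set (Fin k ⊕ Fin (2 ^ (k + 1)))}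
    (hS : MinDegreeTwoOn (rulerGraph k) S) {m : Fin k} (hm : ∀ i, .inl i ∈ S → m < i)
    (hl : ∀ x ∈ pathTrace S, ¬ RulerLabel m x) (j : Fin k) : .inl j ∉ S := by
  intro hj
  obtain ⟨a, ha, -, -, -, h₁, -⟩ := hS _ hj
  rcases a with i | p
  · exact h₁
  rw [rulerGraph_adj_inl_inr] at h₁
  have hd := h₁.dvd_of_lt (hm j hj)
  have hd' : 2 ^ (m.val + 1) ∣ p.val := (pow_dvd_pow 2 (by omega)).trans hd
  have hpos := h₁.pos
  have hle : 2 ^ (m.val + 1) < p.val :=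
    (Nat.pow_lt_pow_right (by norm_num) (by omega)).trans_le (Nat.le_of_dvd hpos hd)
  have hright : p.val + 1 ∉ pathTrace S := by
    intro h
    have hall : ∀ t < 2 ^ (m.val + 1), p.val + (t + 1) ∈ pathTrace S := by
      intro t
      induction t with
      | zero => exact fun _ => h
      | succ t ih =>
        intro ht
        refine (hS.neighbors_mem_pathTrace (ih (by omega)) fun i hi hli => ?_).1
        have := hli.lt_of_not_dvd (m := m) fun hdvd => by
          have := Nat.le_of_dvd (by omega) ((Nat.dvd_add_right hd').1 hdvd)
          omega
        exact lt_asymm this (hm i hi)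
    have := hall (2 ^ (m.val + 1) - 1) (by have := Nat.two_pow_pos (m.val + 1); omega)
    rw [Nat.sub_add_cancel Nat.one_le_two_pow] at this
    exact hl _ this (rulerLabel_add hd)
  have hleft : p.val - 1 ∉ pathTrace S := by
    intro h
    have hall : ∀ t < 2 ^ (m.val + 1), p.val - (t + 1) ∈ pathTrace S := by
      intro t
      induction t with
      | zero => exact fun _ => h
      | succ t ih =>
        intro ht
        refine (hS.neighbors_mem_pathTrace (ih (by omega)) fun i hi hli => ?_).2
        have := hli.lt_of_not_dvd (m := m) fun hdvd => by
          have h3 := (Nat.dvd_sub_iff_right (by omega) hd').1 hdvd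
          have := Nat.le_of_dvd (by omega) h3
          omega
        exact lt_asymm this (hm i hi)
    have := hall (2 ^ (m.val + 1) - 1) (by have := Nat.two_pow_pos (m.val + 1); omega)
    rw [Nat.sub_add_cancel Nat.one_le_two_pow] at this
    exact hl _ this (rulerLabel_sub hd hpos)
  obtain ⟨a, ha, b, hb, hab, h₂, h₃⟩ := hS _ ha
  have key : ∀ c ∈ S, (rulerGraph k).Adj (.inr p) c → c = .inl j := by
    rintro (i | q) hc hadj
    · exact congrArg Sum.inl (Fin.ext (RulerLabel.unique hadj h₁))
    · rcases rulerGraph_adj_inr_inr.1 hadj with h | h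
      · exact (hright ⟨q, h.symm, hc⟩).elim
      · exact (hleft ⟨q, by omega, hc⟩).elim
  exact hab ((key a ha h₂).trans (key b hb h₃).symm)

theorem rulerGraph_okFree (k : ℕ) : OkFree (rulerGraph k) 2 := by
  rintro ⟨a, w, hw, hind⟩
  have hdeg := fun i => (hw i).minDegreeTwoOn
  have hex := fun i => (hdeg i).exists_inl_mem ⟨a i, (w i).start_mem_support⟩
  obtain ⟨m, ⟨c, hmc⟩, hmin⟩ := wellFounded_lt.has_min
    {m : Fin k | ∃ c, .inl m ∈ (w c).support} ((hex 0).imp fun _ h => ⟨0, h⟩)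
  obtain ⟨d, hcd⟩ := exists_ne c
  obtain ⟨j, hj⟩ := hex d
  refine (hdeg d).inl_notMem (m := m) (fun i hi => ?_) ?_ j hj
  · refine lt_of_le_of_ne (not_lt.1 (hmin i ⟨d, hi⟩)) ?_
    rintro rfl
    exact (hind c d hcd.symm _ hmc _ hi).1 rfl
  · rintro _ ⟨p, rfl, hp⟩ hlab
    exact (hind c d hcd.symm _ hmc _ hp).2 hlab

/-! ### A clique minor of the ruler graph -/

/-- The `i`-th extra vertex together with the path vertices in `[2 ^ (i + 1), 2 ^ (i + 2) - 2]`. -/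
def rulerBranchSet (k : ℕ) (i : Fin k) : Set (Fin k ⊕ Fin (2 ^ (k + 1))) :=
  {v | v = .inl i ∨
    ∃ p : Fin (2 ^ (k + 1)), v = .inr p ∧ 2 ^ (i.val + 1) ≤ p.val ∧ p.val + 2 ≤ 2 ^ (i.val + 2)}

theorem inl_mem_rulerBranchSet {k : ℕ} {i j : Fin k} :
    .inl j ∈ rulerBranchSet k i ↔ j = i := by
  simp [rulerBranchSet]

theorem inr_mem_rulerBranchSet {k : ℕ} {i : Fin k} {p : Fin (2 ^ (k + 1))} :
    .inr p ∈ rulerBranchSet k i ↔ 2 ^ (i.val + 1) ≤ p.val ∧ p.val + 2 ≤ 2 ^ (i.val + 2) := by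
  simp [rulerBranchSet]

theorem rulerBranchSet_exists_walk {k : ℕ} (i : Fin k) (v : Fin k ⊕ Fin (2 ^ (k + 1)))
    (hv : v ∈ rulerBranchSet k i) :
    ∃ w : (rulerGraph k).Walk v (.inl i), ∀ z ∈ w.support, z ∈ rulerBranchSet k i := by
  rcases v with j | p
  · obtain rfl := inl_mem_rulerBranchSet.1 hv
    exact ⟨.nil, by simpa using hv⟩
  obtain ⟨t, ht⟩ := Nat.exists_eq_add_of_le (inr_mem_rulerBranchSet.1 hv).1
  induction t generalizing p with
  | zero =>
    have hadj : (rulerGraph k).Adj (.inr p) (.inl i) := by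
      have := rulerLabel_add (m := i) (dvd_zero _)
      rwa [zero_add, ← Nat.add_zero (2 ^ _), ← ht] at this
    refine ⟨hadj.toWalk, ?_⟩
    simpa using ⟨hv, inl_mem_rulerBranchSet.2 rfl⟩
  | succ t ih =>
    obtain ⟨h₁, h₂⟩ := inr_mem_rulerBranchSet.1 hv
    have h₃ := Nat.two_pow_pos (i.val + 1)
    have hq : .inr ⟨p.val - 1, by omega⟩ ∈ rulerBranchSet k i :=
      inr_mem_rulerBranchSet.2 (by constructor <;> dsimp only <;> omega)
    obtain ⟨w, hw⟩ := ih _ hq (by dsimp only; omega)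
    refine ⟨.cons (rulerGraph_adj_inr_inr.2 (by dsimp only; omega)) w, ?_⟩
    intro z hz
    rcases List.mem_cons.1 hz with rfl | hz
    · exact hv
    · exact hw z hz

theorem rulerBranchSet_walkConnected {k : ℕ} (i : Fin k) :
    WalkConnected (rulerGraph k) (rulerBranchSet k i) := by
  intro x hx y hy
  obtain ⟨w, hw⟩ := rulerBranchSet_exists_walk i x hx
  obtain ⟨w', hw'⟩ := rulerBranchSet_exists_walk i y hy
  refine ⟨w.append w'.reverse, fun z hz => ?_⟩
  rcases (Walk.mem_support_append_iff _ _).1 hz with h | h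
  · exact hw z h
  · exact hw' z (by simpa using h)

theorem rulerBranchSet_adj_of_lt {k : ℕ} {i j : Fin k} (hij : i < j) :
    ∃ u ∈ rulerBranchSet k i, ∃ v ∈ rulerBranchSet k j, (rulerGraph k).Adj u v := by
  have h₁ : 2 ^ (i.val + 1) ≤ 2 ^ j.val := Nat.pow_le_pow_right (by norm_num) hij
  have h₂ : 2 ^ (i.val + 1) = 2 * 2 ^ i.val := by ring
  have h₃ : 2 ^ (j.val + 1) = 2 * 2 ^ j.val := by ring
  have h₄ : 2 ^ (j.val + 2) = 4 * 2 ^ j.val := by ring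
  have h₅ : 2 ^ (j.val + 2) ≤ 2 ^ (k + 1) := Nat.pow_le_pow_right (by norm_num) (by omega)
  have h₆ := Nat.two_pow_pos i.val
  refine ⟨.inl i, inl_mem_rulerBranchSet.2 rfl,
    .inr ⟨2 ^ (j.val + 1) + 2 ^ (i.val + 1), by omega⟩, inr_mem_rulerBranchSet.2 ?_, ?_⟩
  · constructor <;> dsimp only <;> omega
  · exact rulerLabel_add (pow_dvd_pow 2 (by omega))

theorem rulerBranchSet_separated {k : ℕ} {i j : Fin k} {p q : Fin (2 ^ (k + 1))} (hij : i < j)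
    (hp : .inr p ∈ rulerBranchSet k i) (hq : .inr q ∈ rulerBranchSet k j) :
    p.val + 2 ≤ q.val :=
  (inr_mem_rulerBranchSet.1 hp).2.trans
    ((Nat.pow_le_pow_right (by norm_num) (by omega)).trans (inr_mem_rulerBranchSet.1 hq).1)

theorem rulerBranchSet_disjoint {k : ℕ} {i j : Fin k} {v : Fin k ⊕ Fin (2 ^ (k + 1))}
    (hi : v ∈ rulerBranchSet k i) (hj : v ∈ rulerBranchSet k j) : i = j := by
  rcases v with l | p
  · exact (inl_mem_rulerBranchSet.1 hi).symm.trans (inl_mem_rulerBranchSet.1 hj)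
  · rcases lt_trichotomy i j with h | h | h
    · have := rulerBranchSet_separated h hi hj
      omega
    · exact h
    · have := rulerBranchSet_separated h hj hi
      omega

/-- Choosing one vertex from each of several branch sets, all of them extra vertices or all of them
path vertices, gives an independent set. -/
theorem rulerBranchSet_not_adj {k : ℕ} {i j : Fin k} {u v : Fin k ⊕ Fin (2 ^ (k + 1))}
    (hu : u ∈ rulerBranchSet k i) (hv : v ∈ rulerBranchSet k j) (hij : i ≠ j)
    (huv : u.isLeft = v.isLeft) : ¬ (rulerGraph k).Adj u v := by
  rcases u with a | p <;> rcases v with b | q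
  · exact rulerGraph_adj_inl_inl
  · simp at huv
  · simp at huv
  · rw [rulerGraph_adj_inr_inr]
    rcases lt_or_gt_of_ne hij with h | h
    · have := rulerBranchSet_separated h hu hv
      omega
    · have := rulerBranchSet_separated h hv hu
      omega

theorem rulerGraph_le_treeIndepNum (r : ℕ) : r + 1 ≤ treeIndepNum (rulerGraph (2 * r + 1)) := by
  classical
  refine le_treeIndepNum fun D => ?_
  obtain ⟨t, ht⟩ := D.exists_bag_meets (rulerBranchSet (2 * r + 1)) rulerBranchSet_walkConnected
    (fun i => ⟨.inl i, inl_mem_rulerBranchSet.2 rfl⟩) (fun i j hij => by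
      rcases lt_or_gt_of_ne hij with h | h
      · exact rulerBranchSet_adj_of_lt h
      · obtain ⟨u, hu, v, hv, huv⟩ := rulerBranchSet_adj_of_lt h
        exact ⟨v, hv, u, hu, huv.symm⟩)
  choose x hxB hxt using ht
  have hinj : Function.Injective x := fun i j h =>
    rulerBranchSet_disjoint (hxB i) (h ▸ hxB j)
  obtain ⟨b, hb⟩ : ∃ b : Bool, r < (Finset.univ.filter fun i => (x i).isLeft = b).card := by
    have := Finset.exists_lt_card_fiber_of_mul_lt_card_of_maps_to
      (s := (Finset.univ : Finset (Fin (2 * r + 1)))) (t := (Finset.univ : Finset Bool))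
      (f := fun i => (x i).isLeft) (n := r) (fun _ _ => Finset.mem_univ _) (by simp)
    simpa using this
  refine ⟨t, ?_⟩
  rw [← Finset.card_image_of_injective _ hinj] at hb
  refine hb.trans_le (card_le_setIndepNum ?_ ?_)
  · intro v hv
    obtain ⟨i, -, rfl⟩ := Finset.mem_image.1 hv
    exact hxt i
  · intro u hu v hv huv
    obtain ⟨i, hi, rfl⟩ := Finset.mem_image.1 hu
    obtain ⟨j, hj, rfl⟩ := Finset.mem_image.1 hv
    refine rulerBranchSet_not_adj (hxB i) (hxB j) (fun h => huv (congrArg x h)) ?_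
    exact (Finset.mem_filter.1 hi).2.trans (Finset.mem_filter.1 hj).2.symm

/-- For every positive integer `n` there exists a `K_{2,2}`-free
`𝒪_2`-free graph `G` with at least `n` vertices whose tree-independence number satisfies
`tree-α(G) ≥ (log₂ |V(G)| − 1) / 2`. -/
theorem stmt_12 (n : ℕ) (hn : 0 < n) :
    ∃ (V : Type) (_ : Finite V) (G : SimpleGraph V),
      n ≤ Nat.card V ∧
      IndFree (completeBipartiteGraph (Fin 2) (Fin 2)) G ∧
      OkFree G 2 ∧
      (Real.logb 2 (Nat.card V) - 1) / 2 ≤ (treeIndepNum G : ℝ) := by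
  have hlt : 2 * n + 1 < 2 ^ (2 * n + 1) := Nat.lt_two_pow_self
  have hcard : Nat.card (Fin (2 * n + 1) ⊕ Fin (2 ^ (2 * n + 1 + 1))) =
      2 * n + 1 + 2 ^ (2 * n + 1 + 1) := by simp
  refine ⟨_, inferInstance, rulerGraph (2 * n + 1), by omega, rulerGraph_indFree _,
    rulerGraph_okFree _, ?_⟩
  have hle : Nat.card (Fin (2 * n + 1) ⊕ Fin (2 ^ (2 * n + 1 + 1))) ≤ 2 ^ (2 * n + 3) := by
    have h₁ : 2 ^ (2 * n + 3) = 4 * 2 ^ (2 * n + 1) := by ring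
    have h₂ : 2 ^ (2 * n + 1 + 1) = 2 * 2 ^ (2 * n + 1) := by ring
    omega
  have hlog : Real.logb 2 (Nat.card (Fin (2 * n + 1) ⊕ Fin (2 ^ (2 * n + 1 + 1)))) ≤
      ((2 * n + 3 : ℕ) : ℝ) := by
    rw [Real.logb_le_iff_le_rpow (by norm_num) (by exact_mod_cast (by omega)),
      Real.rpow_natCast]
    exact_mod_cast hle
  have htree : ((n + 1 : ℕ) : ℝ) ≤ treeIndepNum (rulerGraph (2 * n + 1)) :=
    Nat.cast_le.2 (rulerGraph_le_treeIndepNum n)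
  push_cast at hlog htree
  linarith
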